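/- arXiv:2002.09657 — 2 statements merged into one kernel-verified Lean document; each statement's English description precedes it below -/
import Mathlib

section
/- For every q with 0 < q < 1 and every natural number k, there exists a constant E_k > 0 (depending on q and k) such that for all natural numbers r, s, a with k ≤ r and 0 ≤ a ≤ min(r - k, s), one has |1 - Q_q(r,s,a) / Q_q(r-k,s,a)| ≤ E_k · q^{2(r-a)}. (This is Lemma 7.1 of the paper, controlling the ratio (κ_{t-k}^{r-k,s} / κ_t^{r,s})² = Q_q(r,s,a)/Q_q(r-k,s,a).) -/
/-- The `q`-integer `[n]_q = (q^{-n} - q^n)/(q^{-1} - q)`. -/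
noncomputable def qInt (q : ℝ) (n : ℕ) : ℝ := ((q⁻¹) ^ n - q ^ n) / (q⁻¹ - q)

/-- The `q`-factorial `[n]_q! = [n]_q [n-1]_q ⋯ [1]_q`, with `[0]_q! = 1`. -/
noncomputable def qFact (q : ℝ) (n : ℕ) : ℝ := ∏ i ∈ Finset.range n, qInt q (i + 1)

/-- `Q_q(r,s,a) = [a]_q!·[r-a]_q!·[s-a]_q!·[t+a+1]_q! / ([r]_q!·[s]_q!·[t+1]_q!)`,
where `t = r + s - 2a`; this is `(κ_t^{r,s})^{-2}` in the paper. -/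
noncomputable def Qq (q : ℝ) (r s a : ℕ) : ℝ :=
  qFact q a * qFact q (r - a) * qFact q (s - a) * qFact q (r + s - 2 * a + a + 1) /
    (qFact q r * qFact q s * qFact q (r + s - 2 * a + 1))

/-!
Put `p = q ^ 2`. Passing from `r` to `r + 1` multiplies `Q_q(r,s,a)` by a quotient of four
`q`-integers, which is `(1 - x) * (1 - x * y * z) / ((1 - x * y) * (1 - x * z))` for suitable powers
`x, y, z` of `p`, with `x = p ^ (r - a + 1)`. Such a factor lies in `[1 - x, 1]`, so the ratio
in the theorem, a product of `k` of these factors, is at most `1` and, by Bernoulli's inequality,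
at least `1 - k * p ^ (r - k - a + 1)`.
-/

section CrossFactor

/-- The quotient of two products of `q`-integers with the same sum of indices, in the variables
`x = q ^ (2 * m)`, `y = q ^ (2 * a)`, `z = q ^ (2 * b)`: it equals `[m] [m+a+b] / ([m+a] [m+b])`.
It is the factor by which `Qq` changes when its first argument grows by one. -/
noncomputable def qCrossFactor (x y z : ℝ) : ℝ :=
  (1 - x) * (1 - x * y * z) / ((1 - x * y) * (1 - x * z))

variable {x y z : ℝ}

lemma one_sub_mul_pos (hx0 : 0 ≤ x) (hx1 : x < 1) (hy : y ≤ 1) : 0 < 1 - x * y :=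
  sub_pos.2 ((mul_le_of_le_one_right hx0 hy).trans_lt hx1)

lemma qCrossFactor_le_one (hx0 : 0 ≤ x) (hx1 : x < 1) (hy : y ≤ 1) (hz : z ≤ 1) :
    qCrossFactor x y z ≤ 1 := by
  have numerator_le : (1 - x) * (1 - x * y * z) ≤ (1 - x * y) * (1 - x * z) :=
    calc (1 - x) * (1 - x * y * z) ≤ (1 - x) * (1 - x * y * z) + x * ((1 - y) * (1 - z)) :=
          le_add_of_nonneg_right
            (mul_nonneg hx0 (mul_nonneg (sub_nonneg.2 hy) (sub_nonneg.2 hz)))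
      _ = (1 - x * y) * (1 - x * z) := by ring
  rwa [qCrossFactor,
    div_le_one (mul_pos (one_sub_mul_pos hx0 hx1 hy) (one_sub_mul_pos hx0 hx1 hz))]

lemma one_sub_le_qCrossFactor (hx0 : 0 ≤ x) (hx1 : x < 1) (hy0 : 0 ≤ y) (hy1 : y ≤ 1)
    (hz0 : 0 ≤ z) (hz1 : z ≤ 1) : 1 - x ≤ qCrossFactor x y z := by
  have hxy := one_sub_mul_pos hx0 hx1 hy1
  have hxz := one_sub_mul_pos hx0 hx1 hz1
  have denominator_le : (1 - x * y) * (1 - x * z) ≤ 1 - x * y * z :=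
    calc (1 - x * y) * (1 - x * z) ≤ 1 - x * y :=
          mul_le_of_le_one_right hxy.le (sub_le_self _ (mul_nonneg hx0 hz0))
      _ ≤ 1 - x * y * z :=
          sub_le_sub_left (mul_le_of_le_one_right (mul_nonneg hx0 hy0) hz1) 1
  rw [qCrossFactor, le_div_iff₀ (mul_pos hxy hxz)]
  exact mul_le_mul_of_nonneg_left denominator_le (sub_nonneg.2 hx1.le)

lemma qCrossFactor_pow_mem_Icc {p : ℝ} (hp0 : 0 ≤ p) (hp1 : p < 1) {m : ℕ} (hm : m ≠ 0)
    (a b : ℕ) : qCrossFactor (p ^ m) (p ^ a) (p ^ b) ∈ Set.Icc (1 - p ^ m) 1 := by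
  have pow_nonneg_p (n : ℕ) : 0 ≤ p ^ n := pow_nonneg hp0 n
  have pow_le_one_p (n : ℕ) : p ^ n ≤ 1 := pow_le_one₀ hp0 hp1.le
  have pow_lt_one_p : p ^ m < 1 := pow_lt_one₀ hp0 hp1 hm
  exact ⟨one_sub_le_qCrossFactor (pow_nonneg_p m) pow_lt_one_p (pow_nonneg_p a) (pow_le_one_p a)
      (pow_nonneg_p b) (pow_le_one_p b),
    qCrossFactor_le_one (pow_nonneg_p m) pow_lt_one_p (pow_le_one_p a) (pow_le_one_p b)⟩

end CrossFactor

section QIntegers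

variable {q : ℝ}

lemma inv_sub_self_ne_zero (hq0 : q ≠ 0) (hq1 : |q| ≠ 1) : q⁻¹ - q ≠ 0 := by
  rw [sub_ne_zero, Ne, inv_eq_self₀]
  rintro (rfl | rfl | rfl) <;> simp_all

lemma qInt_eq_one_sub_div (hq0 : q ≠ 0) (n : ℕ) :
    qInt q n = (1 - (q ^ 2) ^ n) / (q ^ n * (q⁻¹ - q)) := by
  have numerator_eq : q⁻¹ ^ n - q ^ n = (1 - (q ^ 2) ^ n) / q ^ n := by
    rw [inv_pow, pow_right_comm]
    field_simp
  rw [qInt, numerator_eq, div_div]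

lemma qInt_ne_zero (hq0 : q ≠ 0) (hq1 : |q| ≠ 1) {n : ℕ} (hn : n ≠ 0) : qInt q n ≠ 0 := by
  have hpow : (q ^ 2) ^ n ≠ 1 := by
    rwa [Ne, pow_eq_one_iff_of_nonneg (sq_nonneg q) hn, ← sq_abs,
      pow_eq_one_iff_of_nonneg (abs_nonneg q) two_ne_zero]
  rw [qInt_eq_one_sub_div hq0]
  exact div_ne_zero (sub_ne_zero.2 hpow.symm)
    (mul_ne_zero (pow_ne_zero n hq0) (inv_sub_self_ne_zero hq0 hq1))

lemma qInt_mul_div_qInt_mul (hq0 : q ≠ 0) (hq1 : |q| ≠ 1) (m a b : ℕ) :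
    qInt q m * qInt q (m + a + b) / (qInt q (m + a) * qInt q (m + b)) =
      qCrossFactor ((q ^ 2) ^ m) ((q ^ 2) ^ a) ((q ^ 2) ^ b) := by
  have hd := inv_sub_self_ne_zero hq0 hq1
  have scale_eq : q ^ m * (q⁻¹ - q) * (q ^ (m + a + b) * (q⁻¹ - q)) =
      q ^ (m + a) * (q⁻¹ - q) * (q ^ (m + b) * (q⁻¹ - q)) := by ring
  have scale_ne_zero : q ^ (m + a) * (q⁻¹ - q) * (q ^ (m + b) * (q⁻¹ - q)) ≠ 0 := by
    simp [hq0, hd]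
  simp only [qInt_eq_one_sub_div hq0, div_mul_div_comm]
  rw [scale_eq, div_div_div_cancel_right₀ scale_ne_zero]
  simp only [qCrossFactor, pow_add]

lemma qFact_succ (q : ℝ) (n : ℕ) : qFact q (n + 1) = qFact q n * qInt q (n + 1) :=
  Finset.prod_range_succ _ _

lemma qFact_ne_zero (hq0 : q ≠ 0) (hq1 : |q| ≠ 1) (n : ℕ) : qFact q n ≠ 0 :=
  Finset.prod_ne_zero_iff.2 fun i _ => qInt_ne_zero hq0 hq1 i.succ_ne_zero

end QIntegers

section Ratio

variable {q : ℝ}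

/- With `r = m + a` and `s = a + b`, no truncated subtraction is left in `Qq q r s a`. -/
lemma Qq_add_add (q : ℝ) (m a b : ℕ) : Qq q (m + a) (a + b) a =
    qFact q a * qFact q m * qFact q b * qFact q (m + b + a + 1) /
      (qFact q (m + a) * qFact q (a + b) * qFact q (m + b + 1)) := by
  rw [Qq, Nat.add_sub_cancel, Nat.add_sub_cancel_left,
    show m + a + (a + b) - 2 * a = m + b by lia]

lemma Qq_ne_zero (hq0 : q ≠ 0) (hq1 : |q| ≠ 1) (r s a : ℕ) : Qq q r s a ≠ 0 := by
  simp [Qq, qFact_ne_zero hq0 hq1]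

lemma Qq_succ_div (hq0 : q ≠ 0) (hq1 : |q| ≠ 1) (m a b : ℕ) :
    Qq q (m + 1 + a) (a + b) a / Qq q (m + a) (a + b) a =
      qCrossFactor ((q ^ 2) ^ (m + 1)) ((q ^ 2) ^ a) ((q ^ 2) ^ (b + 1)) := by
  have hFact := qFact_ne_zero hq0 hq1
  have hInt := fun n => qInt_ne_zero hq0 hq1 (Nat.succ_ne_zero n)
  rw [← qInt_mul_div_qInt_mul hq0 hq1, Qq_add_add, Qq_add_add,
    show m + 1 + b + a + 1 = m + b + a + 1 + 1 by ring,
    show m + 1 + a + (b + 1) = m + b + a + 1 + 1 by ring,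
    show m + 1 + a = m + a + 1 by ring, show m + 1 + b + 1 = m + b + 1 + 1 by ring,
    show m + 1 + (b + 1) = m + b + 1 + 1 by ring,
    qFact_succ q m, qFact_succ q (m + b + a + 1), qFact_succ q (m + a), qFact_succ q (m + b + 1)]
  field_simp [hFact, hInt]

lemma Qq_add_div_eq_prod (hq0 : q ≠ 0) (hq1 : |q| ≠ 1) (m a b k : ℕ) :
    Qq q (m + k + a) (a + b) a / Qq q (m + a) (a + b) a =
      ∏ i ∈ Finset.range k,
        qCrossFactor ((q ^ 2) ^ (m + i + 1)) ((q ^ 2) ^ a) ((q ^ 2) ^ (b + 1)) := by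
  induction k with
  | zero => simp [Qq_ne_zero hq0 hq1]
  | succ k ih =>
    rw [Finset.prod_range_succ, ← ih, ← Qq_succ_div hq0 hq1, mul_comm, ← add_assoc,
      div_mul_div_cancel₀ (Qq_ne_zero hq0 hq1 _ _ _)]

lemma Qq_add_div_mem_Icc (hq0 : q ≠ 0) (hq1 : |q| < 1) (m a b k : ℕ) :
    Qq q (m + k + a) (a + b) a / Qq q (m + a) (a + b) a ∈
      Set.Icc (1 - k * (q ^ 2) ^ (m + 1)) 1 := by
  have hp0 : 0 ≤ q ^ 2 := sq_nonneg q
  have hp1 : q ^ 2 < 1 := (sq_lt_one_iff_abs_lt_one q).2 hq1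
  have factor_mem (i : ℕ) := qCrossFactor_pow_mem_Icc hp0 hp1 (m + i).succ_ne_zero a (b + 1)
  have one_sub_le_factor (i : ℕ) : 1 - (q ^ 2) ^ (m + 1) ≤
      qCrossFactor ((q ^ 2) ^ (m + i + 1)) ((q ^ 2) ^ a) ((q ^ 2) ^ (b + 1)) :=
    (sub_le_sub_left (pow_le_pow_of_le_one hp0 hp1.le (by lia)) 1).trans (factor_mem i).1
  have one_sub_nonneg : 0 ≤ 1 - (q ^ 2) ^ (m + 1) := sub_nonneg.2 (pow_le_one₀ hp0 hp1.le)
  rw [Qq_add_div_eq_prod hq0 hq1.ne]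
  constructor
  · calc 1 - k * (q ^ 2) ^ (m + 1) ≤ (1 - (q ^ 2) ^ (m + 1)) ^ k := by
          simpa [sub_eq_add_neg] using
            one_add_mul_le_pow (show -2 ≤ -(q ^ 2) ^ (m + 1) by linarith) k
      _ = ∏ _i ∈ Finset.range k, (1 - (q ^ 2) ^ (m + 1)) := by simp
      _ ≤ _ := Finset.prod_le_prod (fun _ _ => one_sub_nonneg) fun i _ => one_sub_le_factor i
  · exact Finset.prod_le_one (fun i _ => one_sub_nonneg.trans (one_sub_le_factor i))
      fun i _ => (factor_mem i).2

end Ratio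

theorem kappa_ratio_estimate_general (q : ℝ) (hq0 : q ≠ 0) (hq1 : |q| < 1) (k : ℕ) :
    ∃ E : ℝ, 0 < E ∧ ∀ r s a : ℕ, k ≤ r → a ≤ min (r - k) s →
      |1 - Qq q r s a / Qq q (r - k) s a| ≤ E * q ^ (2 * (r - a)) := by
  have hp0 : 0 < q ^ 2 := sq_pos_of_ne_zero hq0
  have hp1 : q ^ 2 < 1 := (sq_lt_one_iff_abs_lt_one q).2 hq1
  refine ⟨(k + 1) / (q ^ 2) ^ k, by positivity, fun r s a hk ha => ?_⟩
  obtain ⟨har, has⟩ := le_min_iff.1 ha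
  obtain ⟨b, rfl⟩ := Nat.exists_eq_add_of_le has
  obtain ⟨m, rfl⟩ : ∃ m, r = m + k + a := ⟨r - k - a, by lia⟩
  obtain ⟨lower, upper⟩ := Qq_add_div_mem_Icc hq0 hq1 m a b k
  rw [show m + k + a - k = m + a by lia, Nat.add_sub_cancel, abs_of_nonneg (sub_nonneg.2 upper)]
  calc 1 - Qq q (m + k + a) (a + b) a / Qq q (m + a) (a + b) a
      ≤ k * (q ^ 2) ^ (m + 1) := by linarith
    _ ≤ (k + 1) * (q ^ 2) ^ m := by
        gcongr ?_ * ?_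
        · linarith
        · exact pow_le_pow_of_le_one hp0.le hp1.le m.le_succ
    _ = (k + 1) / (q ^ 2) ^ k * q ^ (2 * (m + k)) := by
        rw [pow_mul, pow_add]
        field_simp

/-- Lemma 7.1 of the paper: for fixed `0 < q < 1` and `k`, there is `E_k > 0` with
`|1 - Q_q(r,s,a)/Q_q(r-k,s,a)| ≤ E_k · q^{2(r-a)}` for all `r, s, a` with `k ≤ r` and
`a ≤ min (r-k) s`. -/
theorem kappa_ratio_estimate (q : ℝ) (hq0 : 0 < q) (hq1 : q < 1) (k : ℕ) :
    ∃ E : ℝ, 0 < E ∧ ∀ r s a : ℕ, k ≤ r → a ≤ min (r - k) s →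
      |1 - Qq q r s a / Qq q (r - k) s a| ≤ E * q ^ (2 * (r - a)) :=
  kappa_ratio_estimate_general q hq0.ne' (abs_lt.2 ⟨by linarith, hq1⟩) k
end

section
/- Let N ≥ 3, let F ∈ M_N(ℂ) be a positive definite Hermitian matrix whose spectrum is symmetric (there is a unitary U with U F U^* = F^{-1}), and let q ∈ (0,1] satisfy q + q^{-1} = Tr(F). Then q^{-1} > ‖F‖, i.e. q · ‖F‖ < 1. (In the paper this is the key fact that q‖F₁‖ < 1 for the free orthogonal quantum group O_Q^+ with N ≥ 3, where F₁ = ᵗ(Q^*Q) is normalized by Tr(F₁) = Tr(F₁^{-1}) and q + q^{-1} = Tr(F₁).) -/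
open Matrix
open scoped ComplexOrder

/-- The operator norm of a complex matrix acting on `ℓ²(ℂ^N)`. -/
noncomputable def matOpNorm {N : ℕ} (F : Matrix (Fin N) (Fin N) ℂ) : ℝ :=
  ‖Matrix.toEuclideanCLM (𝕜 := ℂ) F‖

/-!
The function `t + t⁻¹` increases on `[1, ∞)`, and `q + q⁻¹` is at least the trace of `F`, so it is
enough to see that `‖F‖ + ‖F‖⁻¹` is less than the trace. Now `‖F‖` is an eigenvalue of `F`, hence
so is `‖F‖⁻¹`. If `‖F‖ ≠ 1` these are two different terms of the trace, and dimension at least three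
leaves a further positive term. If `‖F‖ = 1` the claim is `2 < Tr F`: when all eigenvalues are `1`
the trace is the dimension, and any eigenvalue `s ≠ 1` gives `2 ≤ s + s⁻¹ < Tr F` as before.
-/

section OrderedField

variable {α : Type*} [Field α] [LinearOrder α] [IsStrictOrderedRing α]

lemma two_le_add_inv {t : α} (ht : 0 < t) : 2 ≤ t + t⁻¹ := by
  have expand : t + t⁻¹ - 2 = (t - 1) ^ 2 / t := by field_simp; ring
  have : 0 ≤ t + t⁻¹ - 2 := expand ▸ by positivity
  linarith

lemma monotoneOn_add_inv : MonotoneOn (fun t : α ↦ t + t⁻¹) (Set.Ici 1) := by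
  intro s (hs : 1 ≤ s) t (ht : 1 ≤ t) hst
  have hs0 : 0 < s := one_pos.trans_le hs
  have ht0 : 0 < t := one_pos.trans_le ht
  have factor : (t + t⁻¹) - (s + s⁻¹) = (t - s) * (1 - (s * t)⁻¹) := by
    field_simp [hs0.ne', ht0.ne']
    ring
  exact sub_nonneg.1 <| factor ▸ mul_nonneg (sub_nonneg.2 hst)
    (sub_nonneg.2 <| inv_le_one_of_one_le₀ <| one_le_mul_of_one_le_of_one_le hs ht)

end OrderedField

lemma add_lt_sum_of_two_lt_card {ι M : Type*} [Fintype ι] [AddCommMonoid M] [PartialOrder M]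
    [IsOrderedCancelAddMonoid M] (hι : 2 < Fintype.card ι) {f : ι → M} (hf : ∀ i, 0 < f i)
    {i j : ι} (hij : i ≠ j) : f i + f j < ∑ k, f k := by
  classical
  have hcard : ({i, j} : Finset ι).card < (Finset.univ : Finset ι).card :=
    Finset.card_le_two.trans_lt hι
  obtain ⟨k, hk, hk_notMem⟩ := Finset.exists_mem_notMem_of_card_lt_card hcard
  rw [← Finset.sum_pair hij]
  exact Finset.sum_lt_sum_of_subset (Finset.subset_univ _) hk hk_notMem (hf k)
    fun l _ _ ↦ (hf l).le

lemma add_inv_lt_sum_of_forall_exists_eq_inv {ι α : Type*} [Fintype ι] [Field α] [LinearOrder α]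
    [IsStrictOrderedRing α] (hι : 2 < Fintype.card ι) {f : ι → α} (hf : ∀ i, 0 < f i)
    (hinv : ∀ i, ∃ j, f j = (f i)⁻¹) (i : ι) : f i + (f i)⁻¹ < ∑ k, f k := by
  have of_ne_one {k : ι} (hk : f k ≠ 1) : f k + (f k)⁻¹ < ∑ l, f l := by
    obtain ⟨j, hj⟩ := hinv k
    have hkj : k ≠ j := by
      rintro rfl
      have hfk := hf k
      rcases self_eq_inv₀.1 hj with hneg | hzero | hone
      · linarith
      · exact hfk.ne' hzero
      · exact hk hone
    exact hj ▸ add_lt_sum_of_two_lt_card hι hf hkj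
  by_cases hi : f i = 1
  · have two_lt_sum : 2 < ∑ k, f k := by
      by_cases hone : ∀ k, f k = 1
      · simpa [hone] using mod_cast hι
      · obtain ⟨k, hk⟩ := not_forall.1 hone
        exact (two_le_add_inv (hf k)).trans_lt (of_ne_one hk)
    simpa [hi, one_add_one_eq_two] using two_lt_sum
  · exact of_ne_one hi

lemma inv_mem_spectrum_of_unitary_conj_eq_inv {R A : Type*} [Semifield R] [Ring A] [Algebra R A]
    [StarMul A] {u : unitary A} {a : Aˣ} (h : (u : A) * a * star (u : A) = ↑a⁻¹) {r : R}
    (hr : r ∈ spectrum R (a : A)) : r⁻¹ ∈ spectrum R (a : A) := by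
  rw [← Unitary.spectrum_star_right_conjugate (U := u), h]
  exact spectrum.inv₀_mem_inv hr

open scoped Matrix.Norms.L2Operator MatrixOrder in
lemma l2_opNorm_mem_spectrum_of_posSemidef {n : Type*} [Fintype n] [DecidableEq n] [Nonempty n]
    {F : Matrix n n ℂ} (hF : F.PosSemidef) : ‖F‖ ∈ spectrum ℝ F :=
  CStarAlgebra.norm_mem_spectrum_of_nonneg hF.nonneg

lemma add_inv_lt_re_trace_of_mem_spectrum {𝕜 n : Type*} [RCLike 𝕜] [Fintype n] [DecidableEq n]
    (hn : 2 < Fintype.card n) {F : Matrix n n 𝕜} (hF : F.PosDef)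
    (hinv : ∀ t ∈ spectrum ℝ F, t⁻¹ ∈ spectrum ℝ F) {t : ℝ} (ht : t ∈ spectrum ℝ F) :
    t + t⁻¹ < RCLike.re F.trace := by
  have htrace : RCLike.re F.trace = ∑ i, hF.1.eigenvalues i := by
    simp [hF.1.trace_eq_sum_eigenvalues]
  rw [hF.1.spectrum_real_eq_range_eigenvalues] at hinv ht
  obtain ⟨i, rfl⟩ := ht
  exact htrace ▸ add_inv_lt_sum_of_forall_exists_eq_inv hn hF.eigenvalues_pos
    (fun j ↦ hinv _ ⟨j, rfl⟩) i

open scoped Matrix.Norms.L2Operator in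
theorem q_mul_opNorm_lt_one_general {n : Type*} [Fintype n] [DecidableEq n]
    (hn : 3 ≤ Fintype.card n) {F : Matrix n n ℂ} (hF : F.PosDef)
    (hinv : ∀ t ∈ spectrum ℝ F, t⁻¹ ∈ spectrum ℝ F)
    {q : ℝ} (hq0 : 0 < q) (hq1 : q ≤ 1) (htr : F.trace.re ≤ q + q⁻¹) :
    ‖F‖ < q⁻¹ ∧ q * ‖F‖ < 1 := by
  have : Nonempty n := Fintype.card_pos_iff.1 (by lia)
  have hlt : ‖F‖ + ‖F‖⁻¹ < F.trace.re :=
    add_inv_lt_re_trace_of_mem_spectrum hn hF hinv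
      (l2_opNorm_mem_spectrum_of_posSemidef hF.posSemidef)
  have hnorm : ‖F‖ < q⁻¹ := by
    by_contra! hle
    have hq : 1 ≤ q⁻¹ := (one_le_inv₀ hq0).2 hq1
    have hge : q⁻¹ + q ≤ ‖F‖ + ‖F‖⁻¹ := by
      simpa only [inv_inv] using monotoneOn_add_inv hq (hq.trans hle) hle
    linarith
  exact ⟨hnorm, (lt_inv_mul_iff₀ hq0).1 (by rwa [mul_one])⟩

/-- If `N ≥ 3`, `F ∈ M_N(ℂ)` is positive definite with symmetric spectrum
(there is a unitary `U` with `U F U^* = F⁻¹`), and `q ∈ (0,1]` satisfies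
`q + q⁻¹ = Tr(F)`, then `q⁻¹ > ‖F‖`, i.e. `q · ‖F‖ < 1`. -/
theorem q_mul_opNorm_lt_one (N : ℕ) (hN : 3 ≤ N)
    (F : Matrix (Fin N) (Fin N) ℂ) (hF : F.PosDef)
    (hsym : ∃ U ∈ Matrix.unitaryGroup (Fin N) ℂ, U * F * Uᴴ = F⁻¹)
    (q : ℝ) (hq0 : 0 < q) (hq1 : q ≤ 1) (htr : q + q⁻¹ = (F.trace).re) :
    matOpNorm F < q⁻¹ ∧ q * matOpNorm F < 1 := by
  obtain ⟨U, hU, hconj⟩ := hsym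
  obtain ⟨a, rfl⟩ := hF.isUnit
  rw [← coe_units_inv] at hconj
  exact q_mul_opNorm_lt_one_general (by simpa using hN) hF
    (fun _ ↦ inv_mem_spectrum_of_unitary_conj_eq_inv (u := ⟨U, hU⟩) hconj) hq0 hq1 htr.ge
end
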